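/- arXiv:2209.09942 — 2 statements merged into one kernel-verified Lean document; each statement's English description precedes it below -/
import Mathlib

section
/- Let ρ_AB be a separable density matrix on ℂ^m ⊗ ℂ^n with a decomposition ρ_AB = ∑_λ ω_λ ⊗ K_λ, where each ω_λ is a density matrix on ℂ^m and each K_λ is a positive semidefinite n×n matrix. If every K_λ belongs to the complex linear span of Λ_B(ρ_AB), then Λ_A(ρ_AB) admits a preparation-and-measurement noncontextual model. -/
/-!
The maps `E ↦ Tr_B[(I ⊗ E) ρ]` and `X ↦ Tr_A[(X ⊗ I) ρ]` are adjoint to each other for the trace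
pairing. If `κ l` lies in the range of the second one, say `κ l = Tr_A[(N l ⊗ I) ρ]`, where `N l`
can be taken Hermitian since `κ l` and `ρ` are, then a state `σ = Tr_B[(I ⊗ E) ρ]` satisfies
`Tr(σ (N l)) = Tr(E (κ l)) ≥ 0`. The separable decomposition therefore reads
`σ = ∑ l, Tr(E (κ l)) • ω l = ∑ l, Tr(σ (N l)) • ω l`, which is the noncontextual model.
-/

open Matrix
open scoped Kronecker ComplexOrder BigOperators

noncomputable section

/-- A density matrix: positive semidefinite with trace 1. -/
def IsDensity {d : Type*} [Fintype d] [DecidableEq d] (ρ : Matrix d d ℂ) : Prop :=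
  ρ.PosSemidef ∧ ρ.trace = 1

/-- Partial trace over the second (B) factor. -/
def trB {m n : ℕ} (ρ : Matrix (Fin m × Fin n) (Fin m × Fin n) ℂ) :
    Matrix (Fin m) (Fin m) ℂ := fun i j => ∑ k, ρ (i, k) (j, k)

/-- Partial trace over the first (A) factor. -/
def trA {m n : ℕ} (ρ : Matrix (Fin m × Fin n) (Fin m × Fin n) ℂ) :
    Matrix (Fin n) (Fin n) ℂ := fun k l => ∑ i, ρ (i, k) (i, l)

/-- The set of states remotely preparable on Alice's side. -/
def LambdaA {m n : ℕ} (ρ : Matrix (Fin m × Fin n) (Fin m × Fin n) ℂ) :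
    Set (Matrix (Fin m) (Fin m) ℂ) :=
  {σ | IsDensity σ ∧ ∃ E : Matrix (Fin n) (Fin n) ℂ, E.PosSemidef ∧
    σ = trB (((1 : Matrix (Fin m) (Fin m) ℂ) ⊗ₖ E) * ρ)}

/-- The set of states remotely preparable on Bob's side. -/
def LambdaB {m n : ℕ} (ρ : Matrix (Fin m × Fin n) (Fin m × Fin n) ℂ) :
    Set (Matrix (Fin n) (Fin n) ℂ) :=
  {σ | IsDensity σ ∧ ∃ E : Matrix (Fin m) (Fin m) ℂ, E.PosSemidef ∧
    σ = trA ((E ⊗ₖ (1 : Matrix (Fin n) (Fin n) ℂ)) * ρ)}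

/-- A preparation-and-measurement noncontextual model for a set `K` of density matrices. -/
def HasNCModel {d : ℕ} (K : Set (Matrix (Fin d) (Fin d) ℂ)) : Prop :=
  ∃ (L : ℕ) (N ω : Fin L → Matrix (Fin d) (Fin d) ℂ),
    (∀ l, (N l).IsHermitian) ∧ (∀ l, IsDensity (ω l)) ∧
    (∀ ρ ∈ K, ∀ l, 0 ≤ (ρ * N l).trace) ∧
    (∀ ρ ∈ K, ∑ l, (ρ * N l).trace = 1) ∧
    (∀ ρ ∈ K, ∀ M : Matrix (Fin d) (Fin d) ℂ, M.PosSemidef → (1 - M).PosSemidef →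
      (ρ * M).trace = ∑ l, (ρ * N l).trace * (ω l * M).trace)

/-- Separability of a bipartite density matrix. -/
def Separable {m n : ℕ} (ρ : Matrix (Fin m × Fin n) (Fin m × Fin n) ℂ) : Prop :=
  ∃ (L : ℕ) (ω : Fin L → Matrix (Fin m) (Fin m) ℂ)
    (κ : Fin L → Matrix (Fin n) (Fin n) ℂ),
    (∀ l, IsDensity (ω l)) ∧ (∀ l, (κ l).PosSemidef) ∧ ρ = ∑ l, ω l ⊗ₖ κ l

theorem exists_isSelfAdjoint_map_eq {R E F : Type*} [Semiring R] [StarMul R] [TrivialStar R]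
    [Invertible (2 : R)] [AddCommGroup E] [Module R E] [StarAddMonoid E] [StarModule R E]
    [AddCommGroup F] [Module R F] [StarAddMonoid F] {f : E →ₗ[R] F}
    (hf : ∀ x, f (star x) = star (f x)) {y : F} (hy : IsSelfAdjoint y)
    (hrange : y ∈ LinearMap.range f) : ∃ x, IsSelfAdjoint x ∧ f x = y := by
  obtain ⟨x, rfl⟩ := hrange
  refine ⟨selfAdjointPart R x, (selfAdjointPart R x).2, ?_⟩
  rw [selfAdjointPart_apply_coe, map_smul, map_add, hf, hy.star_eq, smul_add,
    invOf_two_smul_add_invOf_two_smul]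

open scoped MatrixOrder in
theorem trace_mul_nonneg_of_posSemidef {𝕜 d : Type*} [RCLike 𝕜] [Fintype d] {A B : Matrix d d 𝕜}
    (hA : A.PosSemidef) (hB : B.PosSemidef) : 0 ≤ (A * B).trace := by
  classical
  obtain ⟨C, rfl⟩ := CStarAlgebra.nonneg_iff_eq_star_mul_self.mp hA.nonneg
  rw [star_eq_conjTranspose, ← trace_mul_cycle]
  exact (hB.mul_mul_conjTranspose_same C).trace_nonneg

theorem kronecker_one_mul_one_kronecker_comm {R m n : Type*} [CommSemiring R] [Fintype m]
    [Fintype n] [DecidableEq m] [DecidableEq n] (X : Matrix m m R) (Y : Matrix n n R) :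
    (X ⊗ₖ 1) * (1 ⊗ₖ Y) = (1 ⊗ₖ Y) * (X ⊗ₖ 1) := by
  simp only [← mul_kronecker_mul, Matrix.one_mul, Matrix.mul_one]

section PartialTrace

variable {m n : ℕ}

theorem trace_trB_mul (ρ : Matrix (Fin m × Fin n) (Fin m × Fin n) ℂ)
    (X : Matrix (Fin m) (Fin m) ℂ) : (trB ρ * X).trace = (ρ * (X ⊗ₖ 1)).trace := by
  simp only [trace, diag_apply, mul_apply, trB, kroneckerMap_apply, Fintype.sum_prod_type,
    one_apply, mul_ite, mul_one, mul_zero, Finset.sum_ite_eq', Finset.mem_univ, if_true,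
    Finset.sum_mul]
  exact Finset.sum_congr rfl fun _ _ => Finset.sum_comm

theorem trace_trA_mul (ρ : Matrix (Fin m × Fin n) (Fin m × Fin n) ℂ)
    (Y : Matrix (Fin n) (Fin n) ℂ) : (trA ρ * Y).trace = (ρ * (1 ⊗ₖ Y)).trace := by
  simp only [trace, diag_apply, mul_apply, trA, kroneckerMap_apply, Fintype.sum_prod_type_right,
    one_apply, ite_mul, one_mul, zero_mul, mul_ite, mul_zero, Finset.sum_ite_eq', Finset.mem_univ,
    if_true, Finset.sum_mul]
  exact Finset.sum_congr rfl fun _ _ => Finset.sum_comm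

theorem trB_sum {ι : Type*} (s : Finset ι)
    (ρ : ι → Matrix (Fin m × Fin n) (Fin m × Fin n) ℂ) :
    trB (∑ l ∈ s, ρ l) = ∑ l ∈ s, trB (ρ l) := by
  ext i j
  simp only [trB, Matrix.sum_apply]
  exact Finset.sum_comm

theorem trB_kronecker (A : Matrix (Fin m) (Fin m) ℂ) (B : Matrix (Fin n) (Fin n) ℂ) :
    trB (A ⊗ₖ B) = B.trace • A := by
  ext i j
  simp only [trB, kroneckerMap_apply, ← Finset.mul_sum, Matrix.smul_apply, smul_eq_mul, trace,
    diag_apply, mul_comm]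

theorem conjTranspose_trA (ρ : Matrix (Fin m × Fin n) (Fin m × Fin n) ℂ) :
    (trA ρ)ᴴ = trA ρᴴ := by
  ext k l
  simp only [trA, conjTranspose_apply, star_sum]

theorem trA_kronecker_one_mul_comm (X : Matrix (Fin m) (Fin m) ℂ)
    (ρ : Matrix (Fin m × Fin n) (Fin m × Fin n) ℂ) :
    trA ((X ⊗ₖ 1) * ρ) = trA (ρ * (X ⊗ₖ 1)) := by
  refine ext_iff_trace_mul_right.mpr fun Y => ?_
  rw [trace_trA_mul, trace_trA_mul, trace_mul_cycle, trace_mul_comm, Matrix.mul_assoc,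
    kronecker_one_mul_one_kronecker_comm]

end PartialTrace

section Steering

variable {m n : ℕ} {ρ : Matrix (Fin m × Fin n) (Fin m × Fin n) ℂ}

/-- Steering of Alice's system: the unnormalized state `Tr_B[(I ⊗ E) ρ]` that the measurement
outcome `E` on Bob's side prepares remotely, as a linear map in `E`. -/
def steerA (ρ : Matrix (Fin m × Fin n) (Fin m × Fin n) ℂ) :
    Matrix (Fin n) (Fin n) ℂ →ₗ[ℂ] Matrix (Fin m) (Fin m) ℂ where
  toFun E := trB ((1 ⊗ₖ E) * ρ)
  map_add' E F := by
    ext i j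
    simp only [trB, kronecker_add, Matrix.add_mul, Matrix.add_apply, Finset.sum_add_distrib]
  map_smul' c E := by
    ext i j
    simp only [trB, kronecker_smul, Matrix.smul_mul, Matrix.smul_apply, Finset.smul_sum,
      RingHom.id_apply]

/-- Steering of Bob's system: the unnormalized state `Tr_A[(E ⊗ I) ρ]` that the measurement
outcome `E` on Alice's side prepares remotely, as a linear map in `E`. -/
def steerB (ρ : Matrix (Fin m × Fin n) (Fin m × Fin n) ℂ) :
    Matrix (Fin m) (Fin m) ℂ →ₗ[ℂ] Matrix (Fin n) (Fin n) ℂ where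
  toFun E := trA ((E ⊗ₖ 1) * ρ)
  map_add' E F := by
    ext k l
    simp only [trA, add_kronecker, Matrix.add_mul, Matrix.add_apply, Finset.sum_add_distrib]
  map_smul' c E := by
    ext k l
    simp only [trA, smul_kronecker, Matrix.smul_mul, Matrix.smul_apply, Finset.smul_sum,
      RingHom.id_apply]

theorem trace_steerA_mul (ρ : Matrix (Fin m × Fin n) (Fin m × Fin n) ℂ)
    (E : Matrix (Fin n) (Fin n) ℂ) (X : Matrix (Fin m) (Fin m) ℂ) :
    (steerA ρ E * X).trace = (E * steerB ρ X).trace :=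
  calc (steerA ρ E * X).trace
      = ((1 ⊗ₖ E) * ρ * (X ⊗ₖ 1)).trace := trace_trB_mul _ _
    _ = ((X ⊗ₖ 1) * (1 ⊗ₖ E) * ρ).trace := trace_mul_cycle _ _ _
    _ = ((1 ⊗ₖ E) * (X ⊗ₖ 1) * ρ).trace := by rw [kronecker_one_mul_one_kronecker_comm]
    _ = ((X ⊗ₖ 1) * ρ * (1 ⊗ₖ E)).trace := (trace_mul_cycle _ _ _).symm
    _ = (steerB ρ X * E).trace := (trace_trA_mul _ _).symm
    _ = (E * steerB ρ X).trace := trace_mul_comm _ _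

theorem steerB_conjTranspose (hρ : ρ.IsHermitian) (X : Matrix (Fin m) (Fin m) ℂ) :
    steerB ρ Xᴴ = (steerB ρ X)ᴴ :=
  calc steerB ρ Xᴴ
      = trA (ρ * (Xᴴ ⊗ₖ 1)) := trA_kronecker_one_mul_comm _ _
    _ = trA (((X ⊗ₖ 1) * ρ)ᴴ) := by
      rw [conjTranspose_mul, conjTranspose_kronecker, conjTranspose_one, hρ.eq]
    _ = (steerB ρ X)ᴴ := (conjTranspose_trA _).symm

theorem exists_isHermitian_steerB_eq (hρ : ρ.IsHermitian) {Y : Matrix (Fin n) (Fin n) ℂ}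
    (hY : Y.IsHermitian) (hrange : Y ∈ LinearMap.range (steerB ρ)) :
    ∃ X : Matrix (Fin m) (Fin m) ℂ, X.IsHermitian ∧ steerB ρ X = Y :=
  exists_isSelfAdjoint_map_eq (f := (steerB ρ).restrictScalars ℝ) (steerB_conjTranspose hρ) hY
    hrange

theorem span_LambdaB_le_range_steerB (ρ : Matrix (Fin m × Fin n) (Fin m × Fin n) ℂ) :
    Submodule.span ℂ (LambdaB ρ) ≤ LinearMap.range (steerB ρ) := by
  rw [Submodule.span_le]
  rintro _ ⟨_, E, _, rfl⟩
  exact ⟨E, rfl⟩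

theorem steerA_sum_kronecker {ι : Type*} (s : Finset ι) (ω : ι → Matrix (Fin m) (Fin m) ℂ)
    (κ : ι → Matrix (Fin n) (Fin n) ℂ) (E : Matrix (Fin n) (Fin n) ℂ) :
    steerA (∑ l ∈ s, ω l ⊗ₖ κ l) E = ∑ l ∈ s, (E * κ l).trace • ω l :=
  calc steerA (∑ l ∈ s, ω l ⊗ₖ κ l) E
      = trB (∑ l ∈ s, ω l ⊗ₖ (E * κ l)) := by
        simp only [steerA, LinearMap.coe_mk, AddHom.coe_mk, Finset.mul_sum, ← mul_kronecker_mul,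
          Matrix.one_mul]
    _ = ∑ l ∈ s, (E * κ l).trace • ω l := by simp only [trB_sum, trB_kronecker]

end Steering

theorem hasNCModel_of_eq_sum_trace_smul {d L : ℕ} {K : Set (Matrix (Fin d) (Fin d) ℂ)}
    {N ω : Fin L → Matrix (Fin d) (Fin d) ℂ} (hK : ∀ σ ∈ K, σ.trace = 1)
    (hN : ∀ l, (N l).IsHermitian) (hω : ∀ l, IsDensity (ω l))
    (hnonneg : ∀ σ ∈ K, ∀ l, 0 ≤ (σ * N l).trace)
    (hsum : ∀ σ ∈ K, σ = ∑ l, (σ * N l).trace • ω l) : HasNCModel K := by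
  have htrace : ∀ σ ∈ K, ∀ M : Matrix (Fin d) (Fin d) ℂ,
      (σ * M).trace = ∑ l, (σ * N l).trace * (ω l * M).trace := fun σ hσ M => by
    conv_lhs => rw [hsum σ hσ]
    simp only [Finset.sum_mul, trace_sum, Matrix.smul_mul, trace_smul, smul_eq_mul]
  refine ⟨L, N, ω, hN, hω, hnonneg, fun σ hσ => ?_, fun σ hσ M _ _ => htrace σ hσ M⟩
  simpa only [Matrix.mul_one, (hω _).2, mul_one, hK σ hσ] using (htrace σ hσ 1).symm

theorem separable_to_noncontextual {m n L : ℕ}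
    (ρ : Matrix (Fin m × Fin n) (Fin m × Fin n) ℂ) (hρ : IsDensity ρ)
    (ω : Fin L → Matrix (Fin m) (Fin m) ℂ) (κ : Fin L → Matrix (Fin n) (Fin n) ℂ)
    (hω : ∀ l, IsDensity (ω l)) (hκ : ∀ l, (κ l).PosSemidef)
    (hdec : ρ = ∑ l, ω l ⊗ₖ κ l)
    (hspan : ∀ l, κ l ∈ Submodule.span ℂ (LambdaB ρ)) :
    HasNCModel (LambdaA ρ) := by
  have hpreimage : ∀ l, ∃ X : Matrix (Fin m) (Fin m) ℂ, X.IsHermitian ∧ steerB ρ X = κ l :=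
    fun l => exists_isHermitian_steerB_eq hρ.1.isHermitian (hκ l).isHermitian
      (span_LambdaB_le_range_steerB ρ (hspan l))
  choose N hN hNκ using hpreimage
  have htrace : ∀ E l, (steerA ρ E * N l).trace = (E * κ l).trace := fun E l => by
    rw [trace_steerA_mul, hNκ]
  refine hasNCModel_of_eq_sum_trace_smul (fun σ hσ => hσ.1.2) hN hω ?_ ?_
  · rintro σ ⟨_, E, hE, (rfl : σ = steerA ρ E)⟩ l
    rw [htrace]
    exact trace_mul_nonneg_of_posSemidef hE (hκ l)
  · rintro σ ⟨_, E, _, (rfl : σ = steerA ρ E)⟩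
    simp only [htrace]
    rw [hdec, steerA_sum_kronecker]
end
end

section
/- For every separable density matrix ρ_AB on ℂ² ⊗ ℂ², one has Tr[(σ_x ⊗ σ_x) ρ_AB] + Tr[(σ_z ⊗ σ_z) ρ_AB] ≤ 4/3. -/
/-!
The observable `σ_x ⊗ σ_x + σ_z ⊗ σ_z` is the sum of the swap operator and its partial transpose,
minus the identity, so its expectation on a product operator `P ⊗ Q` is
`Tr (P Q) + Tr (P Qᵀ) - Tr P Tr Q`. For positive semidefinite `P` and `Q` each of the first two
terms is at most `Tr P Tr Q`, by submultiplicativity of the Frobenius norm applied to square roots.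
Hence `1 - σ_x ⊗ σ_x - σ_z ⊗ σ_z` has nonnegative expectation on such products, and by linearity on
separable states, where the original observable therefore has expectation at most `1 ≤ 4/3`.
-/

open Matrix
open scoped Kronecker ComplexOrder BigOperators

noncomputable section

/-- The Pauli matrix σ_x. -/
def pauliX : Matrix (Fin 2) (Fin 2) ℂ := !![0, 1; 1, 0]

/-- The Pauli matrix σ_z. -/
def pauliZ : Matrix (Fin 2) (Fin 2) ℂ := !![1, 0; 0, -1]

section TraceInequality

variable {𝕜 m n : Type*} [RCLike 𝕜] [Fintype m] [Fintype n]

open scoped Matrix.Norms.Frobenius in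
lemma trace_conjTranspose_mul_self_eq_frobenius_norm_sq (A : Matrix m n 𝕜) :
    (Aᴴ * A).trace = ((‖A‖ ^ 2 : ℝ) : 𝕜) := by
  have norm_sq : ‖A‖ ^ 2 = ∑ i, ∑ j, ‖A i j‖ ^ 2 := by
    rw [frobenius_norm_def, ← Real.sqrt_eq_rpow, Real.sq_sqrt (by positivity)]
    simp only [Real.rpow_two]
  rw [norm_sq, Finset.sum_comm]
  simp [trace, mul_apply, RCLike.conj_mul]

open scoped MatrixOrder Matrix.Norms.Frobenius in
lemma trace_mul_le_trace_mul_trace {A B : Matrix n n 𝕜} (hA : A.PosSemidef)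
    (hB : B.PosSemidef) : (A * B).trace ≤ A.trace * B.trace := by
  classical
  obtain ⟨C, rfl⟩ := CStarAlgebra.nonneg_iff_eq_star_mul_self.mp hA.nonneg
  obtain ⟨D, rfl⟩ := CStarAlgebra.nonneg_iff_eq_star_mul_self.mp hB.nonneg
  have cycle : (Cᴴ * C * (Dᴴ * D)).trace = ((C * Dᴴ)ᴴ * (C * Dᴴ)).trace := by
    rw [conjTranspose_mul, conjTranspose_conjTranspose, ← Matrix.mul_assoc, trace_mul_comm]
    simp only [Matrix.mul_assoc]
  have norm_le : ‖C * Dᴴ‖ ^ 2 ≤ ‖C‖ ^ 2 * ‖D‖ ^ 2 := by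
    rw [← mul_pow, ← frobenius_norm_conjTranspose D]
    gcongr
    exact frobenius_norm_mul C Dᴴ
  simp only [star_eq_conjTranspose, cycle, trace_conjTranspose_mul_self_eq_frobenius_norm_sq]
  exact_mod_cast norm_le

end TraceInequality

/-- Block positivity of an operator on a bipartite system, the property defining entanglement
witnesses. It is tested on products of positive semidefinite matrices rather than on product
vectors, and the trace being nonnegative in `ℂ` includes its being real. -/
def IsBlockPositive {m n : Type*} [Fintype m] [Fintype n]
    (W : Matrix (m × n) (m × n) ℂ) : Prop :=
  ∀ ⦃P : Matrix m m ℂ⦄ ⦃Q : Matrix n n ℂ⦄, P.PosSemidef → Q.PosSemidef →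
    0 ≤ (W * (P ⊗ₖ Q)).trace

lemma IsBlockPositive.trace_mul_nonneg_of_separable {m n : ℕ}
    {W ρ : Matrix (Fin m × Fin n) (Fin m × Fin n) ℂ} (hW : IsBlockPositive W)
    (hρ : Separable ρ) : 0 ≤ (W * ρ).trace := by
  obtain ⟨L, ω, κ, hω, hκ, rfl⟩ := hρ
  rw [Matrix.mul_sum, trace_sum]
  exact Finset.sum_nonneg fun l _ => hW (hω l).1 (hκ l)

lemma trace_pauliX_mul_trace_add_trace_pauliZ_mul_trace (P Q : Matrix (Fin 2) (Fin 2) ℂ) :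
    (pauliX * P).trace * (pauliX * Q).trace + (pauliZ * P).trace * (pauliZ * Q).trace =
      (P * Q).trace + (P * Qᵀ).trace - P.trace * Q.trace := by
  simp only [pauliX, pauliZ, trace_fin_two, mul_apply, Fin.sum_univ_two, of_apply, cons_val',
    cons_val_zero, cons_val_one, cons_val_fin_one, transpose_apply]
  ring

lemma isBlockPositive_one_sub_pauliX_sub_pauliZ :
    IsBlockPositive (1 - pauliX ⊗ₖ pauliX - pauliZ ⊗ₖ pauliZ) := by
  intro P Q hP hQ
  have expand : ((1 - pauliX ⊗ₖ pauliX - pauliZ ⊗ₖ pauliZ) * (P ⊗ₖ Q)).trace =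
      (P.trace * Q.trace - (P * Q).trace) + (P.trace * Qᵀ.trace - (P * Qᵀ).trace) := by
    simp only [sub_mul, one_mul, trace_sub, ← mul_kronecker_mul, trace_kronecker, trace_transpose]
    linear_combination -trace_pauliX_mul_trace_add_trace_pauliZ_mul_trace P Q
  rw [expand]
  exact add_nonneg (sub_nonneg.mpr (trace_mul_le_trace_mul_trace hP hQ))
    (sub_nonneg.mpr (trace_mul_le_trace_mul_trace hP hQ.transpose))

theorem witness_xx_zz_separable_bound_general
    {ρ : Matrix (Fin 2 × Fin 2) (Fin 2 × Fin 2) ℂ} (hsep : Separable ρ) :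
    ((pauliX ⊗ₖ pauliX) * ρ).trace + ((pauliZ ⊗ₖ pauliZ) * ρ).trace ≤ ρ.trace := by
  have witness_nonneg :=
    isBlockPositive_one_sub_pauliX_sub_pauliZ.trace_mul_nonneg_of_separable hsep
  simpa only [sub_sub, sub_mul, add_mul, one_mul, trace_sub, trace_add, sub_nonneg]
    using witness_nonneg

theorem witness_xx_zz_separable_bound
    (ρ : Matrix (Fin 2 × Fin 2) (Fin 2 × Fin 2) ℂ)
    (hρ : IsDensity ρ) (hsep : Separable ρ) :
    ((pauliX ⊗ₖ pauliX) * ρ).trace + ((pauliZ ⊗ₖ pauliZ) * ρ).trace ≤ (4 / 3 : ℂ) := by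
  have one_le : (1 : ℂ) ≤ 4 / 3 := by rw [one_le_div₀ (by norm_num)]; norm_num
  exact (witness_xx_zz_separable_bound_general hsep).trans (hρ.2.trans_le one_le)
end
end
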